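/- Assume Mr ≠ e² at every point of U. Then the conformal 2-forms of the RNdS spacetime are recurrent: there exists a 1-form σ on U (i.e., smooth functions σ₁, σ₂, σ₃, σ₄ on U) such that for all a,b,c,d,e' ∈ {1,2,3,4}, (∇_a C)_{bcde'} + (∇_b C)_{cade'} + (∇_c C)_{abde'} = σ_a C_{bcde'} + σ_b C_{cade'} + σ_c C_{abde'} at every point of U. -/

import Mathlib

noncomputable section

open Real

/-- The metric function f(r) = 1 - 2M/r + e²/r² - Λr² of the RNdS metric. -/
def fRN (M e Λ r : ℝ) : ℝ := 1 - 2*M/r + e^2/r^2 - Λ*r^2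

/-- The coordinate domain condition: r > 0, 0 < θ < π, f(r) ≠ 0.
Coordinates: p 0 = t, p 1 = r, p 2 = θ, p 3 = φ. -/
def RNdSDomain (M e Λ : ℝ) : Set (Fin 4 → ℝ) :=
  {p | 0 < p 1 ∧ 0 < p 2 ∧ p 2 < Real.pi ∧ fRN M e Λ (p 1) ≠ 0}

/-- Partial derivative of a scalar function on ℝ⁴ in the i-th coordinate direction. -/
def pd (i : Fin 4) (F : (Fin 4 → ℝ) → ℝ) (p : Fin 4 → ℝ) : ℝ :=
  fderiv ℝ F p (Pi.single i 1)

/-- The Reissner–Nordström–de Sitter metric components g_{ij}. -/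
def gMet (M e Λ : ℝ) (p : Fin 4 → ℝ) (i j : Fin 4) : ℝ :=
  if i = j then
    if i = 0 then -(fRN M e Λ (p 1))
    else if i = 1 then (fRN M e Λ (p 1))⁻¹
    else if i = 2 then (p 1)^2
    else (p 1)^2 * (Real.sin (p 2))^2
  else 0

/-- The pointwise inverse metric g^{ij} (diagonal). -/
def gInv (M e Λ : ℝ) (p : Fin 4 → ℝ) (i j : Fin 4) : ℝ :=
  if i = j then (gMet M e Λ p i i)⁻¹ else 0

/-- Christoffel symbols of the second kind Γ^k_{ij}. -/
def Chr (M e Λ : ℝ) (k i j : Fin 4) (p : Fin 4 → ℝ) : ℝ :=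
  (1/2) * ∑ l, gInv M e Λ p k l *
    (pd i (fun q => gMet M e Λ q j l) p + pd j (fun q => gMet M e Λ q i l) p
      - pd l (fun q => gMet M e Λ q i j) p)

/-- The (0,4) Riemann curvature tensor R_{hijk}. -/
def Riem (M e Λ : ℝ) (p : Fin 4 → ℝ) (h i j k : Fin 4) : ℝ :=
  ∑ α, gMet M e Λ p h α *
    (pd k (Chr M e Λ α i j) p - pd j (Chr M e Λ α i k) p
      + ∑ β, (Chr M e Λ β i j p * Chr M e Λ α β k p - Chr M e Λ β i k p * Chr M e Λ α β j p))

/-- The Ricci tensor Ric_{ij} = g^{hk} R_{hijk}. -/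
def RicT (M e Λ : ℝ) (p : Fin 4 → ℝ) (i j : Fin 4) : ℝ :=
  ∑ h, ∑ k, gInv M e Λ p h k * Riem M e Λ p h i j k

/-- The scalar curvature κ = g^{ij} Ric_{ij}. -/
def scalC (M e Λ : ℝ) (p : Fin 4 → ℝ) : ℝ :=
  ∑ i, ∑ j, gInv M e Λ p i j * RicT M e Λ p i j

/-- Kulkarni–Nomizu product of two (0,2) tensors. -/
def KN (A B : (Fin 4 → ℝ) → Fin 4 → Fin 4 → ℝ) (p : Fin 4 → ℝ) (i j k l : Fin 4) : ℝ :=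
  A p i l * B p j k + A p j k * B p i l - A p i k * B p j l - A p j l * B p i k

/-- The conformal curvature tensor C = R - (1/2)(g ∧ Ric) + (κ/12)(g ∧ g). -/
def confC (M e Λ : ℝ) (p : Fin 4 → ℝ) (h i j k : Fin 4) : ℝ :=
  Riem M e Λ p h i j k - (1/2) * KN (gMet M e Λ) (RicT M e Λ) p h i j k
    + (scalC M e Λ p / 12) * KN (gMet M e Λ) (gMet M e Λ) p h i j k

/-- The conharmonic curvature tensor K = R - (1/2)(g ∧ Ric). -/
def conhK (M e Λ : ℝ) (p : Fin 4 → ℝ) (h i j k : Fin 4) : ℝ :=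
  Riem M e Λ p h i j k - (1/2) * KN (gMet M e Λ) (RicT M e Λ) p h i j k

/-- The concircular curvature tensor W = R - (κ/24)(g ∧ g). -/
def concW (M e Λ : ℝ) (p : Fin 4 → ℝ) (h i j k : Fin 4) : ℝ :=
  Riem M e Λ p h i j k - (scalC M e Λ p / 24) * KN (gMet M e Λ) (gMet M e Λ) p h i j k

/-- The projective curvature tensor P_{hijk} = R_{hijk} - (1/3)(g_{hk}Ric_{ij} - g_{ik}Ric_{hj}). -/
def projP (M e Λ : ℝ) (p : Fin 4 → ℝ) (h i j k : Fin 4) : ℝ :=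
  Riem M e Λ p h i j k
    - (1/3) * (gMet M e Λ p h k * RicT M e Λ p i j - gMet M e Λ p i k * RicT M e Λ p h j)

/-- Index raised (0,4) tensor: B^α_{ijk} = g^{αh} B_{hijk}. -/
def upIdx (M e Λ : ℝ) (B : (Fin 4 → ℝ) → Fin 4 → Fin 4 → Fin 4 → Fin 4 → ℝ)
    (p : Fin 4 → ℝ) (α i j k : Fin 4) : ℝ :=
  ∑ h, gInv M e Λ p α h * B p h i j k

/-- The (0,6) tensor B·Y for a (0,4) tensor Y. -/
def dot4 (M e Λ : ℝ) (B Y : (Fin 4 → ℝ) → Fin 4 → Fin 4 → Fin 4 → Fin 4 → ℝ)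
    (p : Fin 4 → ℝ) (a b c d w s : Fin 4) : ℝ :=
  -(∑ α, upIdx M e Λ B p α a w s * Y p α b c d)
  - (∑ α, upIdx M e Λ B p α b w s * Y p a α c d)
  - (∑ α, upIdx M e Λ B p α c w s * Y p a b α d)
  - (∑ α, upIdx M e Λ B p α d w s * Y p a b c α)

/-- The (0,4) tensor B·Y for a (0,2) tensor Y. -/
def dot2 (M e Λ : ℝ) (B : (Fin 4 → ℝ) → Fin 4 → Fin 4 → Fin 4 → Fin 4 → ℝ)
    (Y : (Fin 4 → ℝ) → Fin 4 → Fin 4 → ℝ)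
    (p : Fin 4 → ℝ) (a b w s : Fin 4) : ℝ :=
  -(∑ α, upIdx M e Λ B p α a w s * Y p α b)
  - (∑ α, upIdx M e Λ B p α b w s * Y p a α)

/-- The Tachibana tensor Q(A,Y) for a (0,4) tensor Y. -/
def tach4 (A : (Fin 4 → ℝ) → Fin 4 → Fin 4 → ℝ)
    (Y : (Fin 4 → ℝ) → Fin 4 → Fin 4 → Fin 4 → Fin 4 → ℝ)
    (p : Fin 4 → ℝ) (a b c d w s : Fin 4) : ℝ :=
  (A p s a * Y p w b c d - A p w a * Y p s b c d)
  + (A p s b * Y p a w c d - A p w b * Y p a s c d)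
  + (A p s c * Y p a b w d - A p w c * Y p a b s d)
  + (A p s d * Y p a b c w - A p w d * Y p a b c s)

/-- The Tachibana tensor Q(A,Y) for a (0,2) tensor Y. -/
def tach2 (A Y : (Fin 4 → ℝ) → Fin 4 → Fin 4 → ℝ)
    (p : Fin 4 → ℝ) (a b w s : Fin 4) : ℝ :=
  (A p s a * Y p w b - A p w a * Y p s b)
  + (A p s b * Y p a w - A p w b * Y p a s)

/-- A symmetric (0,2) tensor A is B-compatible at p for a (0,4) tensor B. -/
def compatAt (M e Λ : ℝ) (A : (Fin 4 → ℝ) → Fin 4 → Fin 4 → ℝ)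
    (B : (Fin 4 → ℝ) → Fin 4 → Fin 4 → Fin 4 → Fin 4 → ℝ) (p : Fin 4 → ℝ) : Prop :=
  ∀ i j k l : Fin 4,
    ∑ α, ∑ β, gInv M e Λ p α β *
      (A p i α * B p β l j k + A p j α * B p β l k i + A p k α * B p β l i j) = 0

/-- Covariant derivative (∇_a B)_{hijk} of a (0,4) tensor. -/
def covD4 (M e Λ : ℝ) (B : (Fin 4 → ℝ) → Fin 4 → Fin 4 → Fin 4 → Fin 4 → ℝ)
    (a : Fin 4) (p : Fin 4 → ℝ) (h i j k : Fin 4) : ℝ :=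
  pd a (fun q => B q h i j k) p
  - (∑ β, Chr M e Λ β a h p * B p β i j k)
  - (∑ β, Chr M e Λ β a i p * B p h β j k)
  - (∑ β, Chr M e Λ β a j p * B p h i β k)
  - (∑ β, Chr M e Λ β a k p * B p h i j β)

/-- The energy–momentum tensor T = Ric - (κ/2) g + Λ g (units 8πG/c⁴ = 1). -/
def emT (M e Λ : ℝ) (p : Fin 4 → ℝ) (i j : Fin 4) : ℝ :=
  RicT M e Λ p i j - (scalC M e Λ p / 2) * gMet M e Λ p i j + Λ * gMet M e Λ p i j

end

/-!
Write `g = h + γ` with `h` the `(t, r)`-block and `γ` the sphere block, and `∧` for the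
Kulkarni–Nomizu product. The curvature is a combination of `h ∧ h`, `h ∧ γ` and `γ ∧ γ`, and its
conformal part is `C = ψ D` with `ψ = (M r - e²) / r⁴` and `D = h ∧ h - h ∧ γ + γ ∧ γ`. From
`∇g = 0` and `(∇_a h)_{bc} = (γ_{ab} u_c + γ_{ac} u_b) / r`, where `u = dr`, the Leibniz rule gives
`∇_a D = 3 (h - γ) ∧ ∇_a h`. Its cyclic sum equals that of `(3 / r) u_a D`, because the cyclic sum
of `u_a (h ∧ h)_{bcde}` alternates three indices over the two-dimensional `(t, r)`-block and
vanishes. Hence the cyclic sum of `∇C` is that of `(ψ' + 3 ψ / r) u_a D`, i.e. of `σ_a C` for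
`σ = (ψ' / ψ + 3 / r) dr`.
-/

section PartialDerivatives

variable {F G : (Fin 4 → ℝ) → ℝ} {p : Fin 4 → ℝ}

lemma pd_congr (a : Fin 4) (h : F =ᶠ[nhds p] G) : pd a F p = pd a G p := by
  rw [pd, pd, h.fderiv_eq]

lemma pd_add (a : Fin 4) (hF : DifferentiableAt ℝ F p) (hG : DifferentiableAt ℝ G p) :
    pd a (fun q => F q + G q) p = pd a F p + pd a G p := by
  simp [pd, fderiv_fun_add hF hG]

lemma pd_sub (a : Fin 4) (hF : DifferentiableAt ℝ F p) (hG : DifferentiableAt ℝ G p) :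
    pd a (fun q => F q - G q) p = pd a F p - pd a G p := by
  simp [pd, fderiv_fun_sub hF hG]

lemma pd_mul (a : Fin 4) (hF : DifferentiableAt ℝ F p) (hG : DifferentiableAt ℝ G p) :
    pd a (fun q => F q * G q) p = pd a F p * G p + F p * pd a G p := by
  simp only [pd, fderiv_fun_mul hF hG, add_apply, smul_apply, smul_eq_mul]
  ring

lemma hasDerivAt_comp_update (hF : DifferentiableAt ℝ F p) (a : Fin 4) :
    HasDerivAt (fun s => F (Function.update p a s)) (pd a F p) (p a) := by
  have hF' : HasFDerivAt F (fderiv ℝ F p) (Function.update p a (p a)) := by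
    simpa using hF.hasFDerivAt
  exact hF'.comp_hasDerivAt (p a) (hasDerivAt_update p a (p a))

lemma pd_comp_apply_one_two {u : ℝ → ℝ → ℝ} {ur uθ : ℝ}
    (hu : DifferentiableAt ℝ (fun q : Fin 4 → ℝ => u (q 1) (q 2)) p)
    (hur : HasDerivAt (fun r => u r (p 2)) ur (p 1)) (huθ : HasDerivAt (u (p 1)) uθ (p 2))
    (a : Fin 4) :
    pd a (fun q => u (q 1) (q 2)) p = ![0, ur, uθ, 0] a := by
  have h := hasDerivAt_comp_update hu a
  fin_cases a
  · exact h.unique (by simpa using hasDerivAt_const _ _)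
  · exact h.unique (by simpa using hur)
  · exact h.unique (by simpa using huθ)
  · exact h.unique (by simpa using hasDerivAt_const _ _)

end PartialDerivatives

noncomputable section

open Real

variable {M e Λ : ℝ} {p : Fin 4 → ℝ}

/-! ### Tensor calculus -/

/-- The covariant derivative `(∇_a A)_{bc}` of a `(0,2)` tensor `A`. -/
def covD2 (M e Λ : ℝ) (A : (Fin 4 → ℝ) → Fin 4 → Fin 4 → ℝ) (a : Fin 4) (p : Fin 4 → ℝ)
    (b c : Fin 4) : ℝ :=
  pd a (fun q => A q b c) p
  - (∑ β, Chr M e Λ β a b p * A p β c)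
  - (∑ β, Chr M e Λ β a c p * A p b β)

lemma covD2_sub {A B : (Fin 4 → ℝ) → Fin 4 → Fin 4 → ℝ} {b c : Fin 4}
    (hA : DifferentiableAt ℝ (fun q => A q b c) p)
    (hB : DifferentiableAt ℝ (fun q => B q b c) p) (a : Fin 4) :
    covD2 M e Λ (fun q i j => A q i j - B q i j) a p b c =
      covD2 M e Λ A a p b c - covD2 M e Λ B a p b c := by
  simp only [covD2, pd_sub a hA hB, mul_sub, Finset.sum_sub_distrib]
  ring

lemma covD4_congr {B B' : (Fin 4 → ℝ) → Fin 4 → Fin 4 → Fin 4 → Fin 4 → ℝ}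
    (hB : B =ᶠ[nhds p] B') (a h i j k : Fin 4) :
    covD4 M e Λ B a p h i j k = covD4 M e Λ B' a p h i j k := by
  simp only [covD4, hB.self_of_nhds,
    pd_congr a (hB.mono fun _ hq => congrFun (congrFun (congrFun (congrFun hq h) i) j) k)]

lemma covD4_mul {ψ : (Fin 4 → ℝ) → ℝ} {B : (Fin 4 → ℝ) → Fin 4 → Fin 4 → Fin 4 → Fin 4 → ℝ}
    {h i j k : Fin 4} (hψ : DifferentiableAt ℝ ψ p)
    (hB : DifferentiableAt ℝ (fun q => B q h i j k) p) (a : Fin 4) :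
    covD4 M e Λ (fun q h i j k => ψ q * B q h i j k) a p h i j k =
      pd a ψ p * B p h i j k + ψ p * covD4 M e Λ B a p h i j k := by
  simp only [covD4, pd_mul a hψ hB, Fin.sum_univ_four]
  ring

lemma covD4_add {B B' : (Fin 4 → ℝ) → Fin 4 → Fin 4 → Fin 4 → Fin 4 → ℝ} {h i j k : Fin 4}
    (hB : DifferentiableAt ℝ (fun q => B q h i j k) p)
    (hB' : DifferentiableAt ℝ (fun q => B' q h i j k) p) (a : Fin 4) :
    covD4 M e Λ (fun q h i j k => B q h i j k + B' q h i j k) a p h i j k =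
      covD4 M e Λ B a p h i j k + covD4 M e Λ B' a p h i j k := by
  simp only [covD4, pd_add a hB hB', mul_add, Finset.sum_add_distrib]
  ring

lemma covD4_sub {B B' : (Fin 4 → ℝ) → Fin 4 → Fin 4 → Fin 4 → Fin 4 → ℝ} {h i j k : Fin 4}
    (hB : DifferentiableAt ℝ (fun q => B q h i j k) p)
    (hB' : DifferentiableAt ℝ (fun q => B' q h i j k) p) (a : Fin 4) :
    covD4 M e Λ (fun q h i j k => B q h i j k - B' q h i j k) a p h i j k =
      covD4 M e Λ B a p h i j k - covD4 M e Λ B' a p h i j k := by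
  simp only [covD4, pd_sub a hB hB', mul_sub, Finset.sum_sub_distrib]
  ring

lemma differentiableAt_KN {A B : (Fin 4 → ℝ) → Fin 4 → Fin 4 → ℝ}
    (hA : ∀ i j, DifferentiableAt ℝ (fun q => A q i j) p)
    (hB : ∀ i j, DifferentiableAt ℝ (fun q => B q i j) p) (h i j k : Fin 4) :
    DifferentiableAt ℝ (fun q => KN A B q h i j k) p := by
  unfold KN
  fun_prop

lemma pd_KN {A B : (Fin 4 → ℝ) → Fin 4 → Fin 4 → ℝ}
    (hA : ∀ i j, DifferentiableAt ℝ (fun q => A q i j) p)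
    (hB : ∀ i j, DifferentiableAt ℝ (fun q => B q i j) p) (a h i j k : Fin 4) :
    pd a (fun q => KN A B q h i j k) p =
      KN (fun q b c => pd a (fun q' => A q' b c) q) B p h i j k +
        KN A (fun q b c => pd a (fun q' => B q' b c) q) p h i j k := by
  have hAB (b c b' c' : Fin 4) : DifferentiableAt ℝ (fun q => A q b c * B q b' c') p :=
    (hA b c).fun_mul (hB b' c')
  simp only [KN]
  rw [pd_sub a (((hAB h k i j).fun_add (hAB i j h k)).fun_sub (hAB h j i k)) (hAB i k h j),
    pd_sub a ((hAB h k i j).fun_add (hAB i j h k)) (hAB h j i k),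
    pd_add a (hAB h k i j) (hAB i j h k)]
  simp only [pd_mul a (hA _ _) (hB _ _)]
  ring

lemma covD4_KN {A B : (Fin 4 → ℝ) → Fin 4 → Fin 4 → ℝ}
    (hA : ∀ i j, DifferentiableAt ℝ (fun q => A q i j) p)
    (hB : ∀ i j, DifferentiableAt ℝ (fun q => B q i j) p) (a h i j k : Fin 4) :
    covD4 M e Λ (KN A B) a p h i j k =
      KN (covD2 M e Λ A a) B p h i j k + KN A (covD2 M e Λ B a) p h i j k := by
  rw [covD4, pd_KN hA hB]
  simp only [covD2, KN, Fin.sum_univ_four]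
  ring

/-- The sum of `T` over the cyclic permutations of its three indices. -/
def cyclicSum (T : Fin 4 → Fin 4 → Fin 4 → ℝ) (a b c : Fin 4) : ℝ :=
  T a b c + T b c a + T c a b

lemma cyclicSum_KN_symmProd (A γ : (Fin 4 → ℝ) → Fin 4 → Fin 4 → ℝ) (u : Fin 4 → ℝ)
    (hγ : ∀ i j, γ p i j = γ p j i) (a b c d e' : Fin 4) :
    cyclicSum (fun a b c => KN A (fun q i j => γ q a i * u j + γ q a j * u i) p b c d e') a b c =
      -cyclicSum (fun a b c => u a * KN A γ p b c d e') a b c := by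
  simp only [cyclicSum, KN, hγ b a, hγ c a, hγ c b]
  ring

lemma forall_eq_of_antisymm_of_lt {ι : Type*} [LinearOrder ι] {S T : ι → ι → ℝ}
    (hS : ∀ j k, S k j = -S j k) (hT : ∀ j k, T k j = -T j k)
    (hlt : ∀ j k, j < k → S j k = T j k) : ∀ j k, S j k = T j k := by
  intro j k
  rcases lt_trichotomy j k with hjk | rfl | hkj
  · exact hlt j k hjk
  · rw [self_eq_neg.mp (hS j j), self_eq_neg.mp (hT j j)]
  · rw [hS k j, hT k j, hlt k j hkj]

/-! ### The metric -/

/-- The first derivative of the metric function `fRN` in `r`. -/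
def fRN' (M e Λ r : ℝ) : ℝ := 2 * M / r ^ 2 - 2 * e ^ 2 / r ^ 3 - 2 * Λ * r

/-- The second derivative of the metric function `fRN` in `r`. -/
def fRN'' (M e Λ r : ℝ) : ℝ := -4 * M / r ^ 3 + 6 * e ^ 2 / r ^ 4 - 2 * Λ

lemma hasDerivAt_fRN {r : ℝ} (hr : r ≠ 0) : HasDerivAt (fRN M e Λ) (fRN' M e Λ r) r := by
  refine ((((hasDerivAt_const r (1 : ℝ)).sub
    ((hasDerivAt_const r (2 * M)).div (hasDerivAt_id r) hr)).add
    ((hasDerivAt_const r (e ^ 2)).div (hasDerivAt_pow 2 r) (pow_ne_zero 2 hr))).sub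
    ((hasDerivAt_pow 2 r).const_mul Λ)).congr_deriv ?_
  simp only [fRN', id]
  push_cast
  field_simp
  ring

lemma hasDerivAt_fRN' {r : ℝ} (hr : r ≠ 0) : HasDerivAt (fRN' M e Λ) (fRN'' M e Λ r) r := by
  refine ((((hasDerivAt_const r (2 * M)).div (hasDerivAt_pow 2 r) (pow_ne_zero 2 hr)).sub
    ((hasDerivAt_const r (2 * e ^ 2)).div (hasDerivAt_pow 3 r) (pow_ne_zero 3 hr))).sub
    ((hasDerivAt_id r).const_mul (2 * Λ))).congr_deriv ?_
  simp only [fRN'']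
  push_cast
  field_simp
  ring

@[fun_prop]
lemma differentiableAt_fRN {r : ℝ} (hr : r ≠ 0) : DifferentiableAt ℝ (fRN M e Λ) r :=
  (hasDerivAt_fRN hr).differentiableAt

@[fun_prop]
lemma differentiableAt_fRN' {r : ℝ} (hr : r ≠ 0) : DifferentiableAt ℝ (fRN' M e Λ) r :=
  (hasDerivAt_fRN' hr).differentiableAt

lemma isOpen_RNdSDomain : IsOpen (RNdSDomain M e Λ) := by
  have hcont : ContinuousOn (fRN M e Λ) (Set.Ioi 0) := fun r hr =>
    (differentiableAt_fRN (ne_of_gt hr)).continuousAt.continuousWithinAt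
  have hne : IsOpen (Set.Ioi 0 ∩ fRN M e Λ ⁻¹' {0}ᶜ) :=
    hcont.isOpen_inter_preimage isOpen_Ioi isOpen_compl_singleton
  convert (hne.preimage (continuous_apply 1)).inter
    ((isOpen_Ioo (a := 0) (b := π)).preimage (continuous_apply (A := fun _ : Fin 4 => ℝ) 2)) using 1
  ext q
  simp only [RNdSDomain, Set.mem_ofPred_eq, Set.mem_inter_iff, Set.mem_preimage, Set.mem_Ioi,
    Set.mem_compl_iff, Set.mem_singleton_iff, Set.mem_Ioo]
  tauto

lemma sin_ne_zero_of_mem_RNdSDomain (hp : p ∈ RNdSDomain M e Λ) : sin (p 2) ≠ 0 :=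
  (sin_pos_of_pos_of_lt_pi hp.2.1 hp.2.2.1).ne'

lemma gMet_of_ne {i j : Fin 4} (hij : i ≠ j) : gMet M e Λ p i j = 0 := if_neg hij

lemma gMet_symm (i j : Fin 4) : gMet M e Λ p i j = gMet M e Λ p j i := by
  rcases eq_or_ne i j with rfl | hij
  · rfl
  · rw [gMet_of_ne hij, gMet_of_ne hij.symm]

lemma gMet_self_ne_zero (hp : p ∈ RNdSDomain M e Λ) (i : Fin 4) : gMet M e Λ p i i ≠ 0 := by
  have hr := hp.1.ne'
  have hf := hp.2.2.2
  have hθ := sin_ne_zero_of_mem_RNdSDomain hp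
  fin_cases i <;> simp [gMet, hr, hf, hθ]

lemma sum_gInv_mul (k : Fin 4) (v : Fin 4 → ℝ) :
    ∑ l, gInv M e Λ p k l * v l = (gMet M e Λ p k k)⁻¹ * v k := by
  simp [gInv]

lemma differentiableAt_gMet (hp : p ∈ RNdSDomain M e Λ) (i j : Fin 4) :
    DifferentiableAt ℝ (fun q => gMet M e Λ q i j) p := by
  have hr := hp.1.ne'
  have hf := hp.2.2.2
  unfold gMet
  split_ifs <;> fun_prop (disch := assumption)

/-- The coordinate derivatives of the diagonal metric components: the entry `(a, i)` is
`∂_a g_{ii}`. -/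
def gMetGrad (M e Λ r θ : ℝ) : Matrix (Fin 4) (Fin 4) ℝ :=
  !![0, 0, 0, 0;
     -fRN' M e Λ r, -fRN' M e Λ r / fRN M e Λ r ^ 2, 2 * r, 2 * r * sin θ ^ 2;
     0, 0, 0, r ^ 2 * (2 * sin θ * cos θ);
     0, 0, 0, 0]

lemma pd_gMet_self (hp : p ∈ RNdSDomain M e Λ) (a i : Fin 4) :
    pd a (fun q => gMet M e Λ q i i) p = gMetGrad M e Λ (p 1) (p 2) a i := by
  have hd := differentiableAt_gMet hp i i
  have hf := hasDerivAt_fRN (M := M) (e := e) (Λ := Λ) hp.1.ne'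
  have hr : HasDerivAt (fun r : ℝ => r ^ 2) (2 * p 1) (p 1) := by
    simpa using hasDerivAt_pow 2 (p 1)
  have hθ : HasDerivAt (fun θ => p 1 ^ 2 * sin θ ^ 2)
      (p 1 ^ 2 * (2 * sin (p 2) * cos (p 2))) (p 2) :=
    (((hasDerivAt_sin (p 2)).fun_pow 2).const_mul _).congr_deriv (by simp)
  fin_cases i
  · refine (pd_comp_apply_one_two (u := fun r _ => -fRN M e Λ r) hd hf.fun_neg
      (hasDerivAt_const _ _) a).trans ?_
    fin_cases a <;> rfl
  · refine (pd_comp_apply_one_two (u := fun r _ => (fRN M e Λ r)⁻¹) hd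
      (hf.fun_inv hp.2.2.2) (hasDerivAt_const _ _) a).trans ?_
    fin_cases a <;> rfl
  · refine (pd_comp_apply_one_two (u := fun r _ => r ^ 2) hd hr
      (hasDerivAt_const _ _) a).trans ?_
    fin_cases a <;> rfl
  · refine (pd_comp_apply_one_two (u := fun r θ => r ^ 2 * sin θ ^ 2) hd
      (hr.mul_const _) hθ a).trans ?_
    fin_cases a <;> rfl

lemma pd_gMet (hp : p ∈ RNdSDomain M e Λ) (a i j : Fin 4) :
    pd a (fun q => gMet M e Λ q i j) p =
      if i = j then gMetGrad M e Λ (p 1) (p 2) a i else 0 := by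
  split_ifs with hij
  · exact hij ▸ pd_gMet_self hp a i
  · simp [pd, gMet_of_ne hij]

/-! ### The connection -/

/-- The Levi-Civita connection matrices as functions of `r` and `θ`: the entry `(k, i)` of the
`j`-th matrix is the Christoffel symbol `Γ^k_{ij}`. -/
def connMatrix (M e Λ r θ : ℝ) : Fin 4 → Matrix (Fin 4) (Fin 4) ℝ :=
  let f := fRN M e Λ r
  let f' := fRN' M e Λ r
  ![!![0, f' / (2 * f), 0, 0;
       f * f' / 2, 0, 0, 0;
       0, 0, 0, 0;
       0, 0, 0, 0],
    !![f' / (2 * f), 0, 0, 0;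
       0, -(f' / (2 * f)), 0, 0;
       0, 0, r⁻¹, 0;
       0, 0, 0, r⁻¹],
    !![0, 0, 0, 0;
       0, 0, -(r * f), 0;
       0, r⁻¹, 0, 0;
       0, 0, 0, cos θ / sin θ],
    !![0, 0, 0, 0;
       0, 0, 0, -(r * f) * sin θ ^ 2;
       0, 0, 0, -(sin θ * cos θ);
       0, r⁻¹, cos θ / sin θ, 0]]

lemma differentiableAt_connMatrix (hr : p 1 ≠ 0) (hf : fRN M e Λ (p 1) ≠ 0)
    (hθ : sin (p 2) ≠ 0) (j k i : Fin 4) :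
    DifferentiableAt ℝ (fun q : Fin 4 → ℝ => connMatrix M e Λ (q 1) (q 2) j k i) p := by
  have hlog : DifferentiableAt ℝ
      (fun q : Fin 4 → ℝ => fRN' M e Λ (q 1) / (2 * fRN M e Λ (q 1))) p := by
    fun_prop (disch := simpa)
  have hmul : DifferentiableAt ℝ
      (fun q : Fin 4 → ℝ => fRN M e Λ (q 1) * fRN' M e Λ (q 1) / 2) p := by
    fun_prop (disch := assumption)
  have hinv : DifferentiableAt ℝ (fun q : Fin 4 → ℝ => (q 1)⁻¹) p := by
    fun_prop (disch := assumption)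
  have hid : DifferentiableAt ℝ (fun q : Fin 4 → ℝ => -(q 1 * fRN M e Λ (q 1))) p := by
    fun_prop (disch := assumption)
  have hcot : DifferentiableAt ℝ (fun q : Fin 4 → ℝ => cos (q 2) / sin (q 2)) p := by
    fun_prop (disch := assumption)
  have hsin : DifferentiableAt ℝ (fun q : Fin 4 → ℝ => sin (q 2) ^ 2) p := by fun_prop
  have hsincos : DifferentiableAt ℝ (fun q : Fin 4 → ℝ => -(sin (q 2) * cos (q 2))) p := by
    fun_prop
  fin_cases j <;> fin_cases k <;> fin_cases i <;> first
    | exact differentiableAt_const _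
    | exact hlog
    | exact hlog.fun_neg
    | exact hmul
    | exact hinv
    | exact hid
    | exact hcot
    | exact hid.fun_mul hsin
    | exact hsincos

/-- The entrywise derivative of `connMatrix` in `r`. -/
def connMatrixDr (M e Λ r θ : ℝ) : Fin 4 → Matrix (Fin 4) (Fin 4) ℝ :=
  let f := fRN M e Λ r
  let f' := fRN' M e Λ r
  let f'' := fRN'' M e Λ r
  ![!![0, f'' / (2 * f) - f' ^ 2 / (2 * f ^ 2), 0, 0;
       (f' ^ 2 + f * f'') / 2, 0, 0, 0;
       0, 0, 0, 0;
       0, 0, 0, 0],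
    !![f'' / (2 * f) - f' ^ 2 / (2 * f ^ 2), 0, 0, 0;
       0, -(f'' / (2 * f) - f' ^ 2 / (2 * f ^ 2)), 0, 0;
       0, 0, -(r ^ 2)⁻¹, 0;
       0, 0, 0, -(r ^ 2)⁻¹],
    !![0, 0, 0, 0;
       0, 0, -(f + r * f'), 0;
       0, -(r ^ 2)⁻¹, 0, 0;
       0, 0, 0, 0],
    !![0, 0, 0, 0;
       0, 0, 0, -(f + r * f') * sin θ ^ 2;
       0, 0, 0, 0;
       0, -(r ^ 2)⁻¹, 0, 0]]

/-- The entrywise derivative of `connMatrix` in `θ`. -/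
def connMatrixDθ (M e Λ r θ : ℝ) : Fin 4 → Matrix (Fin 4) (Fin 4) ℝ :=
  ![0,
    0,
    !![0, 0, 0, 0;
       0, 0, 0, 0;
       0, 0, 0, 0;
       0, 0, 0, -(sin θ ^ 2)⁻¹],
    !![0, 0, 0, 0;
       0, 0, 0, -(r * fRN M e Λ r) * (2 * sin θ * cos θ);
       0, 0, 0, -(cos θ ^ 2 - sin θ ^ 2);
       0, 0, -(sin θ ^ 2)⁻¹, 0]]

lemma hasDerivAt_connMatrix_r {r : ℝ} (hr : r ≠ 0) (hf : fRN M e Λ r ≠ 0) (θ : ℝ)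
    (j k i : Fin 4) :
    HasDerivAt (fun r => connMatrix M e Λ r θ j k i) (connMatrixDr M e Λ r θ j k i) r := by
  have hf₁ := hasDerivAt_fRN (M := M) (e := e) (Λ := Λ) hr
  have hf₂ := hasDerivAt_fRN' (M := M) (e := e) (Λ := Λ) hr
  have log_deriv : HasDerivAt (fun r => fRN' M e Λ r / (2 * fRN M e Λ r))
      (fRN'' M e Λ r / (2 * fRN M e Λ r) - fRN' M e Λ r ^ 2 / (2 * fRN M e Λ r ^ 2)) r := by
    refine (hf₂.fun_div (hf₁.const_mul 2) (mul_ne_zero two_ne_zero hf)).congr_deriv ?_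
    field_simp
  have mul_deriv : HasDerivAt (fun r => fRN M e Λ r * fRN' M e Λ r / 2)
      ((fRN' M e Λ r ^ 2 + fRN M e Λ r * fRN'' M e Λ r) / 2) r :=
    ((hf₁.fun_mul hf₂).div_const 2).congr_deriv (by ring)
  have id_mul : HasDerivAt (fun r => -(r * fRN M e Λ r))
      (-(fRN M e Λ r + r * fRN' M e Λ r)) r :=
    ((hasDerivAt_id r).fun_mul hf₁).fun_neg.congr_deriv (by simp)
  fin_cases j <;> fin_cases k <;> fin_cases i <;> first
    | exact hasDerivAt_const r _
    | exact log_deriv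
    | exact mul_deriv
    | exact log_deriv.fun_neg
    | exact hasDerivAt_inv hr
    | exact id_mul
    | exact id_mul.mul_const _

lemma hasDerivAt_connMatrix_θ (r : ℝ) {θ : ℝ} (hθ : sin θ ≠ 0) (j k i : Fin 4) :
    HasDerivAt (fun θ => connMatrix M e Λ r θ j k i) (connMatrixDθ M e Λ r θ j k i) θ := by
  have cot_deriv : HasDerivAt (fun θ => cos θ / sin θ) (-(sin θ ^ 2)⁻¹) θ := by
    refine ((hasDerivAt_cos θ).fun_div (hasDerivAt_sin θ) hθ).congr_deriv ?_
    field_simp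
    linarith [sin_sq_add_cos_sq θ]
  have sin_sq_deriv : HasDerivAt (fun θ => sin θ ^ 2) (2 * sin θ * cos θ) θ :=
    ((hasDerivAt_sin θ).fun_pow 2).congr_deriv (by simp)
  have sin_mul_cos_deriv : HasDerivAt (fun θ => sin θ * cos θ) (cos θ ^ 2 - sin θ ^ 2) θ :=
    ((hasDerivAt_sin θ).fun_mul (hasDerivAt_cos θ)).congr_deriv (by ring)
  fin_cases j <;> fin_cases k <;> fin_cases i <;> first
    | exact hasDerivAt_const θ _
    | exact cot_deriv
    | exact sin_sq_deriv.const_mul _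
    | exact sin_mul_cos_deriv.fun_neg

lemma Chr_eq (k i j : Fin 4) :
    Chr M e Λ k i j p = 1 / 2 * ((gMet M e Λ p k k)⁻¹ *
      (pd i (fun q => gMet M e Λ q j k) p + pd j (fun q => gMet M e Λ q i k) p
        - pd k (fun q => gMet M e Λ q i j) p)) := by
  rw [Chr, sum_gInv_mul]

lemma Chr_eq_connMatrix (hp : p ∈ RNdSDomain M e Λ) (k i j : Fin 4) :
    Chr M e Λ k i j p = connMatrix M e Λ (p 1) (p 2) j k i := by
  have hr := hp.1.ne'
  have hf := hp.2.2.2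
  have hθ := sin_ne_zero_of_mem_RNdSDomain hp
  simp only [Chr_eq, pd_gMet hp]
  fin_cases k <;> fin_cases i <;> fin_cases j <;>
    simp [gMetGrad, connMatrix, gMet] <;> field_simp

lemma pd_Chr (hp : p ∈ RNdSDomain M e Λ) (a k i j : Fin 4) :
    pd a (Chr M e Λ k i j) p =
      ![0, connMatrixDr M e Λ (p 1) (p 2) j k i, connMatrixDθ M e Λ (p 1) (p 2) j k i, 0] a := by
  have hr := hp.1.ne'
  have hf := hp.2.2.2
  have hθ := sin_ne_zero_of_mem_RNdSDomain hp
  rw [pd_congr a ((isOpen_RNdSDomain.eventually_mem hp).mono fun q hq =>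
    Chr_eq_connMatrix hq k i j)]
  exact pd_comp_apply_one_two (u := fun r θ => connMatrix M e Λ r θ j k i)
    (differentiableAt_connMatrix hr hf hθ j k i) (hasDerivAt_connMatrix_r hr hf _ j k i)
    (hasDerivAt_connMatrix_θ _ hθ j k i) a

/-! ### The curvature -/

/-- The `(t, r)`-block `h` of the metric, extended by zero to a tensor on the spacetime. As the
metric is diagonal, testing the first index is enough. -/
def baseMet (M e Λ : ℝ) (p : Fin 4 → ℝ) (i j : Fin 4) : ℝ :=
  if i < 2 then gMet M e Λ p i j else 0

/-- The `(θ, φ)`-block `γ = g - h` of the metric, i.e. `r²` times the round metric of the sphere,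
extended by zero to a tensor on the spacetime. -/
def sphereMet (M e Λ : ℝ) (p : Fin 4 → ℝ) (i j : Fin 4) : ℝ :=
  if i < 2 then 0 else gMet M e Λ p i j

lemma baseMet_add_sphereMet (i j : Fin 4) :
    baseMet M e Λ p i j + sphereMet M e Λ p i j = gMet M e Λ p i j := by
  unfold baseMet sphereMet
  split_ifs <;> simp

lemma sphereMet_symm (i j : Fin 4) : sphereMet M e Λ p i j = sphereMet M e Λ p j i := by
  fin_cases i <;> fin_cases j <;> simp [sphereMet, gMet]

lemma differentiableAt_baseMet (hp : p ∈ RNdSDomain M e Λ) (i j : Fin 4) :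
    DifferentiableAt ℝ (fun q => baseMet M e Λ q i j) p := by
  unfold baseMet
  split_ifs
  · exact differentiableAt_gMet hp i j
  · exact differentiableAt_const _

lemma differentiableAt_sphereMet (hp : p ∈ RNdSDomain M e Λ) (i j : Fin 4) :
    DifferentiableAt ℝ (fun q => sphereMet M e Λ q i j) p := by
  unfold sphereMet
  split_ifs
  · exact differentiableAt_const _
  · exact differentiableAt_gMet hp i j

lemma Riem_antisymm (h i j k : Fin 4) : Riem M e Λ p h i k j = -Riem M e Λ p h i j k := by
  simp only [Riem, Fin.sum_univ_four]
  ring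

lemma Riem_eq (h i j k : Fin 4) :
    Riem M e Λ p h i j k = gMet M e Λ p h h *
      (pd k (Chr M e Λ h i j) p - pd j (Chr M e Λ h i k) p
        + ∑ β, (Chr M e Λ β i j p * Chr M e Λ h β k p
          - Chr M e Λ β i k p * Chr M e Λ h β j p)) :=
  Fintype.sum_eq_single h fun α hα => by rw [gMet_of_ne hα.symm, zero_mul]

lemma Riem_eq_KN (hp : p ∈ RNdSDomain M e Λ) (h i j k : Fin 4) :
    Riem M e Λ p h i j k =
      -(fRN'' M e Λ (p 1) / 4) * KN (baseMet M e Λ) (baseMet M e Λ) p h i j k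
      - fRN' M e Λ (p 1) / (2 * p 1) * KN (baseMet M e Λ) (sphereMet M e Λ) p h i j k
      + (1 - fRN M e Λ (p 1)) / (2 * p 1 ^ 2) *
        KN (sphereMet M e Λ) (sphereMet M e Λ) p h i j k := by
  have hr := hp.1.ne'
  have hf := hp.2.2.2
  have hθ := sin_ne_zero_of_mem_RNdSDomain hp
  have hsc := sin_sq_add_cos_sq (p 2)
  revert j k
  refine forall_eq_of_antisymm_of_lt (Riem_antisymm h i)
    (fun j k => by simp only [KN]; ring) fun j k hjk => ?_
  simp only [Riem_eq, pd_Chr hp, Chr_eq_connMatrix hp, Fin.sum_univ_four]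
  fin_cases j <;> fin_cases k <;> first | exact absurd hjk (by decide) | skip
  all_goals
    fin_cases h <;> fin_cases i <;>
    simp [-mul_eq_zero, connMatrix, connMatrixDr, connMatrixDθ, KN, baseMet, sphereMet, gMet] <;>
    field_simp <;> first | ring1 | linear_combination (-2) * hsc

lemma sum_gInv_mul_KN_baseMet_baseMet (hp : p ∈ RNdSDomain M e Λ) (i j : Fin 4) :
    ∑ h, ∑ k, gInv M e Λ p h k * KN (baseMet M e Λ) (baseMet M e Λ) p h i j k =
      2 * baseMet M e Λ p i j := by
  have hg := gMet_self_ne_zero hp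
  simp only [sum_gInv_mul]
  simp only [Fin.sum_univ_four]
  fin_cases i <;> fin_cases j <;> simp [KN, baseMet, gMet_of_ne] <;>
    field_simp [hg] <;> norm_num

lemma sum_gInv_mul_KN_baseMet_sphereMet (hp : p ∈ RNdSDomain M e Λ) (i j : Fin 4) :
    ∑ h, ∑ k, gInv M e Λ p h k * KN (baseMet M e Λ) (sphereMet M e Λ) p h i j k =
      2 * gMet M e Λ p i j := by
  have hg := gMet_self_ne_zero hp
  simp only [sum_gInv_mul]
  simp only [Fin.sum_univ_four]
  fin_cases i <;> fin_cases j <;> simp [KN, baseMet, sphereMet, gMet_of_ne] <;>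
    field_simp [hg] <;> norm_num

lemma sum_gInv_mul_KN_sphereMet_sphereMet (hp : p ∈ RNdSDomain M e Λ) (i j : Fin 4) :
    ∑ h, ∑ k, gInv M e Λ p h k * KN (sphereMet M e Λ) (sphereMet M e Λ) p h i j k =
      2 * sphereMet M e Λ p i j := by
  have hg := gMet_self_ne_zero hp
  simp only [sum_gInv_mul]
  simp only [Fin.sum_univ_four]
  fin_cases i <;> fin_cases j <;> simp [KN, sphereMet, gMet_of_ne] <;>
    field_simp [hg] <;> norm_num

lemma RicT_eq (hp : p ∈ RNdSDomain M e Λ) (i j : Fin 4) :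
    RicT M e Λ p i j =
      -(fRN'' M e Λ (p 1) / 2 + fRN' M e Λ (p 1) / p 1) * baseMet M e Λ p i j
      + ((1 - fRN M e Λ (p 1)) / p 1 ^ 2 - fRN' M e Λ (p 1) / p 1) * sphereMet M e Λ p i j := by
  simp only [RicT, Riem_eq_KN hp, mul_add, mul_sub, Finset.sum_add_distrib,
    Finset.sum_sub_distrib, mul_left_comm (gInv _ _ _ _ _ _), ← Finset.mul_sum,
    sum_gInv_mul_KN_baseMet_baseMet hp, sum_gInv_mul_KN_baseMet_sphereMet hp,
    sum_gInv_mul_KN_sphereMet_sphereMet hp, ← baseMet_add_sphereMet]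
  ring

lemma scalC_eq (hp : p ∈ RNdSDomain M e Λ) :
    scalC M e Λ p = -fRN'' M e Λ (p 1) - 4 * fRN' M e Λ (p 1) / p 1
      + 2 * (1 - fRN M e Λ (p 1)) / p 1 ^ 2 := by
  have hr := hp.1.ne'
  have hg := gMet_self_ne_zero hp
  simp only [scalC, sum_gInv_mul]
  simp only [RicT_eq hp, Fin.sum_univ_four, baseMet, sphereMet, Fin.reduceLT, lt_self_iff_false,
    ↓reduceIte, mul_zero, add_zero, zero_add]
  field_simp [hg]
  ring

/-- The scalar `ψ` for which the conformal curvature tensor is `ψ` times `weylShape`. -/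
def weylScalar (M e r : ℝ) : ℝ := (M * r - e ^ 2) / r ^ 4

/-- The algebraic Weyl tensor `h ∧ h - h ∧ γ + γ ∧ γ` of the block decomposition `g = h + γ`. -/
def weylShape (M e Λ : ℝ) (p : Fin 4 → ℝ) (h i j k : Fin 4) : ℝ :=
  KN (baseMet M e Λ) (baseMet M e Λ) p h i j k - KN (baseMet M e Λ) (sphereMet M e Λ) p h i j k
    + KN (sphereMet M e Λ) (sphereMet M e Λ) p h i j k

lemma weylScalar_eq {r : ℝ} (hr : r ≠ 0) :
    weylScalar M e r =
      fRN' M e Λ r / (6 * r) - fRN'' M e Λ r / 12 + (1 - fRN M e Λ r) / (6 * r ^ 2) := by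
  simp only [weylScalar, fRN, fRN', fRN'']
  field_simp
  ring

lemma confC_eq (hp : p ∈ RNdSDomain M e Λ) (h i j k : Fin 4) :
    confC M e Λ p h i j k = weylScalar M e (p 1) * weylShape M e Λ p h i j k := by
  rw [weylScalar_eq (Λ := Λ) hp.1.ne']
  simp only [confC, weylShape, Riem_eq_KN hp, scalC_eq hp, KN, RicT_eq hp,
    ← baseMet_add_sphereMet]
  ring

/-! ### Covariant derivatives of the curvature -/

lemma sum_Chr_mul_gMet (hp : p ∈ RNdSDomain M e Λ) (a b c : Fin 4) :
    ∑ β, Chr M e Λ β a b p * gMet M e Λ p β c =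
      (pd a (fun q => gMet M e Λ q b c) p + pd b (fun q => gMet M e Λ q a c) p
        - pd c (fun q => gMet M e Λ q a b) p) / 2 := by
  rw [Fintype.sum_eq_single c fun β hβ => by rw [gMet_of_ne hβ, mul_zero], Chr_eq]
  field_simp [gMet_self_ne_zero hp c]

lemma covD2_gMet (hp : p ∈ RNdSDomain M e Λ) (a b c : Fin 4) :
    covD2 M e Λ (gMet M e Λ) a p b c = 0 := by
  simp only [covD2, gMet_symm b, sum_Chr_mul_gMet hp]
  ring

/-- The components of the coordinate 1-form `dr`. -/
def dr : Fin 4 → ℝ := Pi.single 1 1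

lemma covD2_baseMet (hp : p ∈ RNdSDomain M e Λ) (a b c : Fin 4) :
    covD2 M e Λ (baseMet M e Λ) a p b c =
      (sphereMet M e Λ p a b * dr c + sphereMet M e Λ p a c * dr b) / p 1 := by
  have hr := hp.1.ne'
  have hf := hp.2.2.2
  have hpd : pd a (fun q => baseMet M e Λ q b c) p =
      if b < 2 then pd a (fun q => gMet M e Λ q b c) p else 0 := by
    unfold baseMet
    split_ifs
    · rfl
    · simp [pd]
  simp only [covD2, hpd, pd_gMet hp, Chr_eq_connMatrix hp, Fin.sum_univ_four]
  fin_cases a <;> fin_cases b <;> fin_cases c <;>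
    simp [connMatrix, gMetGrad, baseMet, sphereMet, gMet, dr] <;> field_simp <;> ring

lemma covD2_sphereMet (hp : p ∈ RNdSDomain M e Λ) (a b c : Fin 4) :
    covD2 M e Λ (sphereMet M e Λ) a p b c = -covD2 M e Λ (baseMet M e Λ) a p b c := by
  have hsub : sphereMet M e Λ = fun q i j => gMet M e Λ q i j - baseMet M e Λ q i j := by
    funext q i j
    rw [← baseMet_add_sphereMet, add_sub_cancel_left]
  rw [hsub, covD2_sub (differentiableAt_gMet hp b c) (differentiableAt_baseMet hp b c),
    covD2_gMet hp, zero_sub]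

lemma differentiableAt_weylShape (hp : p ∈ RNdSDomain M e Λ) (h i j k : Fin 4) :
    DifferentiableAt ℝ (fun q => weylShape M e Λ q h i j k) p := by
  have hA := differentiableAt_baseMet hp
  have hB := differentiableAt_sphereMet hp
  exact ((differentiableAt_KN hA hA h i j k).sub (differentiableAt_KN hA hB h i j k)).add
    (differentiableAt_KN hB hB h i j k)

lemma covD4_weylShape (hp : p ∈ RNdSDomain M e Λ) (a h i j k : Fin 4) :
    covD4 M e Λ (weylShape M e Λ) a p h i j k =
      3 * KN (fun q b c => baseMet M e Λ q b c - sphereMet M e Λ q b c)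
        (covD2 M e Λ (baseMet M e Λ) a) p h i j k := by
  have hA := differentiableAt_baseMet hp
  have hB := differentiableAt_sphereMet hp
  have hAA := differentiableAt_KN hA hA h i j k
  have hAB := differentiableAt_KN hA hB h i j k
  have hBB := differentiableAt_KN hB hB h i j k
  unfold weylShape
  rw [covD4_add (hAA.fun_sub hAB) hBB, covD4_sub hAA hAB, covD4_KN hA hA, covD4_KN hA hB,
    covD4_KN hB hB]
  simp only [KN, covD2_sphereMet hp]
  ring

lemma cyclicSum_dr_mul_KN_baseMet (a b c d e' : Fin 4) :
    cyclicSum (fun a b c => dr a * KN (baseMet M e Λ) (baseMet M e Λ) p b c d e') a b c = 0 := by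
  fin_cases a <;> fin_cases b <;> fin_cases c <;> simp [cyclicSum, KN, dr, baseMet] <;> ring

lemma cyclicSum_covD4_weylShape (hp : p ∈ RNdSDomain M e Λ) (a b c d e' : Fin 4) :
    cyclicSum (fun a b c => covD4 M e Λ (weylShape M e Λ) a p b c d e') a b c =
      3 / p 1 * cyclicSum (fun a b c => dr a * weylShape M e Λ p b c d e') a b c := by
  have hKN := cyclicSum_KN_symmProd (fun q b c => baseMet M e Λ q b c - sphereMet M e Λ q b c)
    (sphereMet M e Λ) dr (sphereMet_symm (p := p)) a b c d e'
  have hbase := cyclicSum_dr_mul_KN_baseMet (M := M) (e := e) (Λ := Λ) (p := p) a b c d e'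
  simp only [cyclicSum, covD4_weylShape hp, weylShape, KN, covD2_baseMet hp] at hKN hbase ⊢
  linear_combination 3 / p 1 * (hKN - hbase)

lemma hasDerivAt_weylScalar {r : ℝ} (hr : r ≠ 0) :
    HasDerivAt (weylScalar M e) (e ^ 2 / r ^ 5 - 3 / r * weylScalar M e r) r := by
  refine ((((hasDerivAt_id r).const_mul M).sub_const (e ^ 2)).fun_div (hasDerivAt_pow 4 r)
    (pow_ne_zero 4 hr)).congr_deriv ?_
  simp only [weylScalar, id]
  push_cast
  field_simp
  ring

lemma differentiableAt_weylScalar (hr : p 1 ≠ 0) :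
    DifferentiableAt ℝ (fun q : Fin 4 → ℝ => weylScalar M e (q 1)) p := by
  have hd := (hasDerivAt_weylScalar (M := M) (e := e) hr).differentiableAt
  fun_prop

lemma pd_weylScalar (hr : p 1 ≠ 0) (a : Fin 4) :
    pd a (fun q => weylScalar M e (q 1)) p =
      (e ^ 2 / p 1 ^ 5 - 3 / p 1 * weylScalar M e (p 1)) * dr a := by
  rw [pd_comp_apply_one_two (u := fun r _ => weylScalar M e r) (differentiableAt_weylScalar hr)
    (hasDerivAt_weylScalar hr)
    (hasDerivAt_const _ _) a]
  fin_cases a <;> simp [dr]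

lemma covD4_confC (hp : p ∈ RNdSDomain M e Λ) (a b c d e' : Fin 4) :
    covD4 M e Λ (confC M e Λ) a p b c d e' =
      (e ^ 2 / p 1 ^ 5 - 3 / p 1 * weylScalar M e (p 1)) * dr a * weylShape M e Λ p b c d e' +
        weylScalar M e (p 1) * covD4 M e Λ (weylShape M e Λ) a p b c d e' := by
  have hr := hp.1.ne'
  have hC : confC M e Λ =ᶠ[nhds p]
      fun q h i j k => weylScalar M e (q 1) * weylShape M e Λ q h i j k :=
    (isOpen_RNdSDomain.eventually_mem hp).mono fun q hq => by
      funext h i j k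
      exact confC_eq hq h i j k
  rw [covD4_congr hC,
    covD4_mul (differentiableAt_weylScalar hr) (differentiableAt_weylShape hp b c d e'),
    pd_weylScalar hr]

/-- The recurrence 1-form `σ = e² / (r (M r - e²)) dr` of the conformal 2-forms, that is
`(ψ' / ψ + 3 / r) dr` with `ψ = weylScalar M e r`. -/
def recurrenceForm (M e : ℝ) (a : Fin 4) (p : Fin 4 → ℝ) : ℝ :=
  e ^ 2 / (p 1 * (M * p 1 - e ^ 2)) * dr a

lemma contDiffOn_recurrenceForm {U : Set (Fin 4 → ℝ)} (hr : ∀ p ∈ U, p 1 ≠ 0)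
    (hMr : ∀ p ∈ U, M * p 1 ≠ e ^ 2) {n : WithTop ℕ∞} (a : Fin 4) :
    ContDiffOn ℝ n (recurrenceForm M e a) U := by
  have hden : ∀ p ∈ U, p 1 * (M * p 1 - e ^ 2) ≠ 0 := fun p hp =>
    mul_ne_zero (hr p hp) (sub_ne_zero.mpr (hMr p hp))
  unfold recurrenceForm
  fun_prop (disch := assumption)

lemma recurrenceForm_mul_weylScalar (hr : p 1 ≠ 0) (hMr : M * p 1 ≠ e ^ 2) (a : Fin 4) :
    recurrenceForm M e a p * weylScalar M e (p 1) = e ^ 2 / p 1 ^ 5 * dr a := by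
  have hden : p 1 * M - e ^ 2 ≠ 0 := by rwa [mul_comm, sub_ne_zero]
  unfold recurrenceForm weylScalar
  field_simp

lemma cyclicSum_covD4_confC (hp : p ∈ RNdSDomain M e Λ) (hMr : M * p 1 ≠ e ^ 2)
    (a b c d e' : Fin 4) :
    cyclicSum (fun a b c => covD4 M e Λ (confC M e Λ) a p b c d e') a b c =
      cyclicSum (fun a b c => recurrenceForm M e a p * confC M e Λ p b c d e') a b c := by
  have hshape := cyclicSum_covD4_weylShape hp a b c d e'
  have hσ := recurrenceForm_mul_weylScalar hp.1.ne' hMr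
  simp only [cyclicSum, covD4_confC hp, confC_eq hp, ← mul_assoc, hσ] at hshape ⊢
  linear_combination weylScalar M e (p 1) * hshape

theorem rnds_conformal_two_forms_recurrent_general (M e Λ : ℝ) (U : Set (Fin 4 → ℝ))
    (hsub : U ⊆ RNdSDomain M e Λ) (hMr : ∀ p ∈ U, M * p 1 ≠ e ^ 2) :
    ∃ σ : Fin 4 → (Fin 4 → ℝ) → ℝ,
      (∀ a : Fin 4, ContDiffOn ℝ (⊤ : ℕ∞) (σ a) U) ∧
      ∀ p ∈ U, ∀ a b c d e' : Fin 4,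
        covD4 M e Λ (confC M e Λ) a p b c d e'
          + covD4 M e Λ (confC M e Λ) b p c a d e'
          + covD4 M e Λ (confC M e Λ) c p a b d e' =
        σ a p * confC M e Λ p b c d e'
          + σ b p * confC M e Λ p c a d e'
          + σ c p * confC M e Λ p a b d e' :=
  ⟨recurrenceForm M e, contDiffOn_recurrenceForm (fun _ hp => (hsub hp).1.ne') hMr,
    fun p hp => cyclicSum_covD4_confC (hsub hp) (hMr p hp)⟩

end

/-- assuming Mr ≠ e² on U, the conformal 2-forms of the RNdS
spacetime are recurrent. -/
theorem rnds_conformal_two_forms_recurrent (M e Λ : ℝ) (U : Set (Fin 4 → ℝ))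
    (hU : U.Nonempty) (hconn : IsConnected U) (hopen : IsOpen U)
    (hsub : U ⊆ RNdSDomain M e Λ)
    (hMr : ∀ p ∈ U, M * p 1 ≠ e^2) :
    ∃ σ : Fin 4 → (Fin 4 → ℝ) → ℝ,
      (∀ a : Fin 4, ContDiffOn ℝ (⊤ : ℕ∞) (σ a) U) ∧
      ∀ p ∈ U, ∀ a b c d e' : Fin 4,
        covD4 M e Λ (confC M e Λ) a p b c d e'
          + covD4 M e Λ (confC M e Λ) b p c a d e'
          + covD4 M e Λ (confC M e Λ) c p a b d e' =
        σ a p * confC M e Λ p b c d e'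
          + σ b p * confC M e Λ p c a d e'
          + σ c p * confC M e Λ p a b d e' :=
  rnds_conformal_two_forms_recurrent_general M e Λ U hsub hMr
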